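/- The limit as n → ∞ of n^{5/2} · ( (log p(n+1))/(n+1) + (log p(n-1))/(n-1) - 2·(log p(n))/n ) equals 3π/√24. -/

import Mathlib

open Real Filter Topology

/-- The partition function, as a real number. -/
noncomputable def p (n : ℕ) : ℝ := (Fintype.card (Nat.Partition n) : ℝ)

/-!
Write `p m` as the Cauchy coefficient of the generating function of partitions on the circle of
radius `exp (-t)`. With `t` chosen such that the mean size of a partition in the Boltzmann
distribution of parameter `t` is `n`, the central limit theorem for that distribution gives the
precise size of `p n`, and also of `p (n + 1)` and `p (n - 1)` with the same `t`. In these three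
formulas the main terms of `log (p m)` are affine in `m`, so the second difference only sees the
normalised contour integrals; it comes from the second moment of the limiting Gaussian and has
order `n ^ (-3 / 2)`. In the discrete Leibniz rule for `log (p n) / n` the value and the first
difference of `log (p n)` contribute to the same order as the second difference, and for these the
leading terms of the saddle-point formula suffice.
-/

namespace PartitionAsymptotics

section ExponentialSums

lemma one_add_pow_le_mul_exp (n : ℕ) {x : ℝ} (hx : 0 ≤ x) :
    (1 + x) ^ n ≤ n.factorial * exp 1 * exp x := by
  have h := pow_div_factorial_le_exp (1 + x) (by positivity) n
  rwa [div_le_iff₀' (by positivity), exp_add, ← mul_assoc] at h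

lemma div_one_sub_exp_neg_le_one_add {y : ℝ} (hy : 0 < y) : y / (1 - exp (-y)) ≤ 1 + y := by
  have hexp : exp (-y) < 1 := by simpa using hy
  have h : (1 + y) * exp (-y) ≤ 1 := by
    rw [exp_neg, ← div_eq_mul_inv, div_le_one (exp_pos y), add_comm]
    exact add_one_le_exp y
  rw [div_le_iff₀ (by linarith)]
  linarith

lemma tendsto_id_nhdsGT_zero : Tendsto (fun y : ℝ => y) (𝓝[>] 0) (𝓝 0) :=
  tendsto_id.mono_left nhdsWithin_le_nhds

lemma tendsto_exp_neg_nhdsGT_zero (a : ℝ) :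
    Tendsto (fun y : ℝ => exp (-(a * y))) (𝓝[>] 0) (𝓝 1) := by
  have h : Continuous fun y : ℝ => exp (-(a * y)) := by fun_prop
  simpa using (h.tendsto 0).mono_left nhdsWithin_le_nhds

lemma tendsto_div_one_sub_exp_neg :
    Tendsto (fun y : ℝ => y / (1 - exp (-y))) (𝓝[>] 0) (𝓝 1) := by
  have h : HasDerivAt (fun y : ℝ => 1 - exp (-y)) 1 0 := by
    simpa using (hasDerivAt_neg (0 : ℝ)).exp.const_sub 1
  simpa [div_eq_mul_inv, mul_comm] using h.tendsto_slope_zero_right.inv₀ one_ne_zero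

/-- The exponential sum `∑_{k ≥ 1} k ^ a * exp (-k y)`, indexed from zero. -/
noncomputable def powExpSum (a : ℕ) (y : ℝ) : ℝ :=
  ∑' k : ℕ, ((k : ℝ) + 1) ^ a * exp (-((k + 1) * y))

lemma powExpSum_nonneg (a : ℕ) (y : ℝ) : 0 ≤ powExpSum a y :=
  tsum_nonneg fun k => by positivity

lemma hasSum_ascFactorial_mul_exp_neg (a : ℕ) {y : ℝ} (hy : 0 < y) :
    HasSum (fun k : ℕ => ((k + 1).ascFactorial a : ℝ) * exp (-((k + 1) * y)))
      (a.factorial * exp (-y) / (1 - exp (-y)) ^ (a + 1)) := by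
  have hr : ‖exp (-y)‖ < 1 := by simpa using hy
  have h := (hasSum_choose_mul_geometric_of_norm_lt_one a hr).mul_left (a.factorial * exp (-y))
  rw [mul_one_div] at h
  refine h.congr_fun fun k => ?_
  rw [Nat.ascFactorial_eq_factorial_mul_choose, ← exp_nat_mul, Nat.cast_mul,
    show -(((k : ℝ) + 1) * y) = -y + k * -y by ring, exp_add]
  ring

lemma pow_mul_exp_neg_le (a k : ℕ) (y : ℝ) :
    ((k : ℝ) + 1) ^ a * exp (-((k + 1) * y)) ≤
      (k + 1).ascFactorial a * exp (-((k + 1) * y)) := by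
  gcongr
  exact_mod_cast Nat.pow_succ_le_ascFactorial (k + 1) a

lemma summable_pow_mul_exp_neg (a : ℕ) {y : ℝ} (hy : 0 < y) :
    Summable fun k : ℕ => ((k : ℝ) + 1) ^ a * exp (-((k + 1) * y)) :=
  (hasSum_ascFactorial_mul_exp_neg a hy).summable.of_nonneg_of_le
    (fun k => by positivity) fun k => pow_mul_exp_neg_le a k y

lemma powExpSum_le (a : ℕ) {y : ℝ} (hy : 0 < y) :
    powExpSum a y ≤ a.factorial * exp (-y) / (1 - exp (-y)) ^ (a + 1) :=
  hasSum_le (fun k => pow_mul_exp_neg_le a k y) (summable_pow_mul_exp_neg a hy).hasSum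
    (hasSum_ascFactorial_mul_exp_neg a hy)

lemma le_powExpSum (a : ℕ) {y : ℝ} (hy : 0 < y) :
    exp (-(a * y)) * (a.factorial * exp (-y) / (1 - exp (-y)) ^ (a + 1)) ≤ powExpSum a y := by
  refine hasSum_le_inj (fun k => k + a) (add_left_injective a) (fun k _ => by positivity)
    (fun k => ?_) ((hasSum_ascFactorial_mul_exp_neg a hy).mul_left _)
    (summable_pow_mul_exp_neg a hy).hasSum
  have hle : ((k + 1).ascFactorial a : ℝ) ≤ ((k + a : ℕ) + 1) ^ a := by
    exact_mod_cast (Nat.ascFactorial_le_pow_add k a).trans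
      (Nat.pow_le_pow_left (Nat.le_succ (k + a)) a)
  calc exp (-(a * y)) * ((k + 1).ascFactorial a * exp (-((k + 1) * y)))
      = (k + 1).ascFactorial a * exp (-(((k + a : ℕ) + 1) * y)) := by
        rw [mul_left_comm, ← exp_add]
        push_cast
        ring_nf
    _ ≤ _ := by gcongr

lemma tendsto_pow_mul_powExpSum (a : ℕ) :
    Tendsto (fun y => y ^ (a + 1) * powExpSum a y) (𝓝[>] 0) (𝓝 a.factorial) := by
  have hupper : Tendsto
      (fun y => y ^ (a + 1) * (a.factorial * exp (-y) / (1 - exp (-y)) ^ (a + 1)))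
      (𝓝[>] 0) (𝓝 a.factorial) := by
    have h := ((tendsto_exp_neg_nhdsGT_zero 1).mul
      (tendsto_div_one_sub_exp_neg.pow (a + 1))).const_mul (a.factorial : ℝ)
    rw [one_pow, mul_one, mul_one] at h
    refine h.congr fun y => ?_
    rw [one_mul, div_pow]
    ring
  have hlower := (tendsto_exp_neg_nhdsGT_zero a).mul hupper
  rw [one_mul] at hlower
  refine tendsto_of_tendsto_of_tendsto_of_le_of_le' hlower hupper ?_ ?_ <;>
    filter_upwards [self_mem_nhdsWithin] with y (hy : 0 < y)
  · rw [mul_left_comm]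
    gcongr
    exact le_powExpSum a hy
  · gcongr
    exact powExpSum_le a hy

lemma pow_mul_powExpSum_le (a : ℕ) {y : ℝ} (hy : 0 < y) :
    y ^ (a + 1) * powExpSum a y ≤ a.factorial * ((a + 1).factorial * exp 1) := by
  have hexp : exp (-y) < 1 := by simpa using hy
  have : 0 ≤ y / (1 - exp (-y)) := div_nonneg hy.le (by linarith)
  calc y ^ (a + 1) * powExpSum a y
      ≤ y ^ (a + 1) * (a.factorial * exp (-y) / (1 - exp (-y)) ^ (a + 1)) := by
        gcongr
        exact powExpSum_le a hy
    _ = a.factorial * ((y / (1 - exp (-y))) ^ (a + 1) * exp (-y)) := by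
        rw [div_pow]
        ring
    _ ≤ a.factorial * ((1 + y) ^ (a + 1) * exp (-y)) := by
        gcongr
        exact div_one_sub_exp_neg_le_one_add hy
    _ ≤ a.factorial * ((a + 1).factorial * exp 1 * exp y * exp (-y)) := by
        gcongr
        exact one_add_pow_le_mul_exp (a + 1) hy.le
    _ = a.factorial * ((a + 1).factorial * exp 1) := by
        rw [mul_assoc _ (exp y), ← exp_add, add_neg_cancel, exp_zero, mul_one]

end ExponentialSums

section LambertSums

/-- The product `j * k` of the positive indices `j = x.1 + 1` and `k = x.2 + 1`. -/
def indexProd (x : ℕ × ℕ) : ℝ := ((x.1 : ℝ) + 1) * ((x.2 : ℝ) + 1)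

/-- The weight `exp (-j k t) / j` of the pair of positive indices `j = x.1 + 1`, `k = x.2 + 1`. -/
noncomputable def lambertWeight (t : ℝ) (x : ℕ × ℕ) : ℝ :=
  exp (-(indexProd x * t)) / ((x.1 : ℝ) + 1)

/-- The double series `∑_{j, k ≥ 1} (j k) ^ a * exp (-j k t) / j`. For `a = 0` it is the logarithm
of the generating function of partitions at `exp (-t)`, and its `a`-th derivative in general, up to
sign. -/
noncomputable def lambertSum (a : ℕ) (t : ℝ) : ℝ :=
  ∑' x : ℕ × ℕ, indexProd x ^ a * lambertWeight t x

lemma indexProd_pos (x : ℕ × ℕ) : 0 < indexProd x := by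
  unfold indexProd
  positivity

lemma lambertWeight_nonneg (t : ℝ) (x : ℕ × ℕ) : 0 ≤ lambertWeight t x := by
  unfold lambertWeight
  positivity

lemma indexProd_pow_mul_lambertWeight_nonneg (a : ℕ) (t : ℝ) (x : ℕ × ℕ) :
    0 ≤ indexProd x ^ a * lambertWeight t x :=
  mul_nonneg (pow_nonneg (indexProd_pos x).le a) (lambertWeight_nonneg t x)

lemma lambertWeight_anti {s t : ℝ} (h : s ≤ t) (x : ℕ × ℕ) :
    lambertWeight t x ≤ lambertWeight s x := by
  unfold lambertWeight
  gcongr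
  exact (indexProd_pos x).le

lemma hasSum_one_div_succ_sq : HasSum (fun n : ℕ => 1 / ((n : ℝ) + 1) ^ 2) (π ^ 2 / 6) := by
  simpa using (hasSum_nat_add_iff' 1).mpr hasSum_zeta_two

lemma summable_one_div_indexProd_sq : Summable fun x : ℕ × ℕ => 1 / indexProd x ^ 2 := by
  have h := hasSum_one_div_succ_sq.summable.mul_of_nonneg hasSum_one_div_succ_sq.summable
    (fun n => by positivity) (fun n => by positivity)
  refine h.congr fun x => ?_
  rw [indexProd, mul_pow, one_div_mul_one_div]

lemma indexProd_pow_mul_lambertWeight_le (a : ℕ) {t : ℝ} (ht : 0 < t) (x : ℕ × ℕ) :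
    indexProd x ^ a * lambertWeight t x ≤
      ((a + 2).factorial / t ^ (a + 2)) * (1 / indexProd x ^ 2) := by
  have hx := indexProd_pos x
  have hexp := pow_div_factorial_le_exp (indexProd x * t) (by positivity) (a + 2)
  have hweight : lambertWeight t x ≤ exp (-(indexProd x * t)) :=
    div_le_self (exp_pos _).le (by linarith [Nat.cast_nonneg (α := ℝ) x.1])
  calc indexProd x ^ a * lambertWeight t x
      ≤ indexProd x ^ a * ((indexProd x * t) ^ (a + 2) / (a + 2).factorial)⁻¹ := by
        rw [exp_neg] at hweight
        grw [hweight, ← hexp]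
    _ = _ := by
        rw [mul_pow, pow_add]
        field_simp

lemma summable_lambertSum (a : ℕ) {t : ℝ} (ht : 0 < t) :
    Summable fun x : ℕ × ℕ => indexProd x ^ a * lambertWeight t x :=
  .of_nonneg_of_le (indexProd_pow_mul_lambertWeight_nonneg a t)
    (indexProd_pow_mul_lambertWeight_le a ht) (summable_one_div_indexProd_sq.mul_left _)

lemma hasSum_lambertSum (a : ℕ) {t : ℝ} (ht : 0 < t) :
    HasSum (fun x : ℕ × ℕ => indexProd x ^ a * lambertWeight t x) (lambertSum a t) :=
  (summable_lambertSum a ht).hasSum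

lemma continuousOn_lambertSum (a : ℕ) : ContinuousOn (lambertSum a) (Set.Ioi 0) := by
  intro t (ht : 0 < t)
  have h : ContinuousOn (lambertSum a) (Set.Ici (t / 2)) := by
    refine continuousOn_tsum (fun x => by unfold lambertWeight; fun_prop)
      (summable_lambertSum a (half_pos ht)) fun x s hs => ?_
    rw [norm_of_nonneg (indexProd_pow_mul_lambertWeight_nonneg a s x)]
    exact mul_le_mul_of_nonneg_left (lambertWeight_anti hs x) (pow_nonneg (indexProd_pos x).le a)
  exact (h.continuousAt (Ici_mem_nhds (half_lt_self ht))).continuousWithinAt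

lemma pow_mul_lambertSum_eq_tsum (a : ℕ) {t : ℝ} (ht : 0 < t) :
    t ^ (a + 1) * lambertSum a t = ∑' j : ℕ, 1 / ((j : ℝ) + 1) ^ 2 *
      ((((j : ℝ) + 1) * t) ^ (a + 1) * powExpSum a (((j : ℝ) + 1) * t)) := by
  rw [lambertSum, (summable_lambertSum a ht).tsum_prod, ← tsum_mul_left]
  refine tsum_congr fun j => ?_
  simp only [powExpSum, ← tsum_mul_left]
  refine tsum_congr fun k => ?_
  rw [lambertWeight, indexProd, mul_pow, mul_pow,
    show ((k : ℝ) + 1) * ((j + 1) * t) = (j + 1) * (k + 1) * t by ring]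
  field_simp
  rw [pow_succ']

lemma lambertRow_nonneg (a j : ℕ) {t : ℝ} (ht : 0 < t) :
    0 ≤ 1 / ((j : ℝ) + 1) ^ 2 *
      ((((j : ℝ) + 1) * t) ^ (a + 1) * powExpSum a (((j : ℝ) + 1) * t)) := by
  have := powExpSum_nonneg a (((j : ℝ) + 1) * t)
  positivity

lemma lambertRow_le (a j : ℕ) {t : ℝ} (ht : 0 < t) :
    1 / ((j : ℝ) + 1) ^ 2 * ((((j : ℝ) + 1) * t) ^ (a + 1) * powExpSum a (((j : ℝ) + 1) * t)) ≤
      1 / ((j : ℝ) + 1) ^ 2 * (a.factorial * ((a + 1).factorial * exp 1)) :=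
  mul_le_mul_of_nonneg_left (pow_mul_powExpSum_le a (by positivity)) (by positivity)

lemma pow_mul_lambertSum_le (a : ℕ) {t : ℝ} (ht : 0 < t) :
    t ^ (a + 1) * lambertSum a t ≤
      π ^ 2 / 6 * (a.factorial * ((a + 1).factorial * exp 1)) := by
  have hbound := hasSum_one_div_succ_sq.mul_right (a.factorial * ((a + 1).factorial * exp 1))
  rw [pow_mul_lambertSum_eq_tsum a ht, ← hbound.tsum_eq]
  exact (hbound.summable.of_nonneg_of_le (fun j => lambertRow_nonneg a j ht)
    fun j => lambertRow_le a j ht).tsum_le_tsum (fun j => lambertRow_le a j ht) hbound.summable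

lemma tendsto_const_mul_nhdsGT_zero {c : ℝ} (hc : 0 < c) :
    Tendsto (fun t => c * t) (𝓝[>] 0) (𝓝[>] 0) := by
  refine tendsto_nhdsWithin_iff.mpr ⟨?_, ?_⟩
  · simpa using tendsto_id_nhdsGT_zero.const_mul c
  · filter_upwards [self_mem_nhdsWithin] with t (ht : 0 < t)
    exact mul_pos hc ht

lemma tendsto_pow_mul_lambertSum (a : ℕ) :
    Tendsto (fun t => t ^ (a + 1) * lambertSum a t) (𝓝[>] 0)
      (𝓝 (π ^ 2 / 6 * a.factorial)) := by
  rw [← hasSum_one_div_succ_sq.tsum_eq, ← tsum_mul_right]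
  refine (tendsto_tsum_of_dominated_convergence
    (hasSum_one_div_succ_sq.summable.mul_right (a.factorial * ((a + 1).factorial * exp 1)))
    (fun j => ((tendsto_pow_mul_powExpSum a).comp
      (tendsto_const_mul_nhdsGT_zero j.cast_add_one_pos)).const_mul (1 / ((j : ℝ) + 1) ^ 2))
    ?_).congr' ?_ <;> filter_upwards [self_mem_nhdsWithin] with t (ht : 0 < t)
  · intro j
    rw [Function.comp, norm_of_nonneg (lambertRow_nonneg a j ht)]
    exact lambertRow_le a j ht
  · exact (pow_mul_lambertSum_eq_tsum a ht).symm

end LambertSums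

section GeneratingFunction

open PowerSeries
open scoped PowerSeries.WithPiTopology

lemma norm_pow_succ_lt_one {z : ℂ} (hz : ‖z‖ < 1) (i : ℕ) : ‖z ^ (i + 1)‖ < 1 := by
  rw [norm_pow]
  exact pow_lt_one₀ (norm_nonneg z) hz i.succ_ne_zero

lemma hasSum_coeff_one_mul_pow (z : ℂ) :
    HasSum (fun n => coeff n (1 : PowerSeries ℂ) * z ^ n) 1 := by
  convert hasSum_single 0 fun n hn => ?_ using 1
  · simp
  · rw [coeff_one, if_neg hn, zero_mul]

lemma hasSum_coeff_mul_mul_pow {f g : PowerSeries ℂ} {z S T : ℂ}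
    (hf : HasSum (fun n => coeff n f * z ^ n) S) (hg : HasSum (fun n => coeff n g * z ^ n) T) :
    HasSum (fun n => coeff n (f * g) * z ^ n) (S * T) := by
  have hcoeff (n : ℕ) : coeff n (f * g) * z ^ n = ∑ kl ∈ Finset.HasAntidiagonal.antidiagonal n,
      coeff kl.1 f * z ^ kl.1 * (coeff kl.2 g * z ^ kl.2) := by
    rw [coeff_mul, Finset.sum_mul]
    refine Finset.sum_congr rfl fun kl hkl => ?_
    rw [← Finset.HasAntidiagonal.mem_antidiagonal.mp hkl, pow_add]
    ring
  have hsum := summable_norm_sum_mul_antidiagonal_of_summable_norm hf.summable.norm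
    hg.summable.norm
  have htsum := tsum_mul_tsum_eq_tsum_sum_antidiagonal_of_summable_norm hf.summable.norm
    hg.summable.norm
  rw [hf.tsum_eq, hg.tsum_eq] at htsum
  simp only [hcoeff, htsum]
  exact hsum.of_norm.hasSum

lemma hasSum_coeff_prod_mul_pow {f : ℕ → PowerSeries ℂ} {z : ℂ} {S : ℕ → ℂ}
    (h : ∀ i, HasSum (fun n => coeff n (f i) * z ^ n) (S i)) (K : ℕ) :
    HasSum (fun n => coeff n (∏ i ∈ Finset.range K, f i) * z ^ n)
      (∏ i ∈ Finset.range K, S i) := by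
  induction K with
  | zero => simpa only [Finset.range_zero, Finset.prod_empty] using hasSum_coeff_one_mul_pow z
  | succ K ih =>
    rw [Finset.prod_range_succ, Finset.prod_range_succ]
    exact hasSum_coeff_mul_mul_pow ih (h K)

lemma coeff_tsum_X_pow (i n : ℕ) :
    coeff n (∑' j : ℕ, (X : PowerSeries ℂ) ^ ((i + 1) * j)) = if (i + 1) ∣ n then 1 else 0 := by
  have hsum : Summable fun j : ℕ => (X : PowerSeries ℂ) ^ ((i + 1) * j) := by
    simp_rw [pow_mul]
    exact WithPiTopology.summable_pow_of_constantCoeff_eq_zero (by simp)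
  rw [hsum.map_tsum (coeff n) (WithPiTopology.continuous_coeff ℂ n)]
  simp_rw [coeff_X_pow]
  split_ifs with h
  · obtain ⟨m, rfl⟩ := h
    refine (tsum_eq_single m fun j hj => if_neg fun h => hj ?_).trans (if_pos rfl)
    exact (Nat.eq_of_mul_eq_mul_left i.succ_pos h).symm
  · refine (tsum_congr fun j => if_neg ?_).trans tsum_zero
    rintro rfl
    exact h (dvd_mul_right _ _)

lemma hasSum_coeff_tsum_X_pow_mul_pow {z : ℂ} (hz : ‖z‖ < 1) (i : ℕ) :
    HasSum (fun n => coeff n (∑' j : ℕ, (X : PowerSeries ℂ) ^ ((i + 1) * j)) * z ^ n)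
      (1 - z ^ (i + 1))⁻¹ := by
  have hinj : Function.Injective fun j : ℕ => (i + 1) * j :=
    fun a b h => Nat.eq_of_mul_eq_mul_left i.succ_pos h
  rw [← hinj.hasSum_iff]
  · refine (hasSum_geometric_of_norm_lt_one (norm_pow_succ_lt_one hz i)).congr_fun fun j => ?_
    rw [Function.comp, coeff_tsum_X_pow, if_pos (dvd_mul_right _ _), one_mul, pow_mul]
  · intro n hn
    rw [coeff_tsum_X_pow, if_neg, zero_mul]
    rintro ⟨j, rfl⟩
    exact hn ⟨j, rfl⟩

/-- The number of partitions of `n` into parts of size at most `K`. -/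
noncomputable def boundedCard (K n : ℕ) : ℕ := (Nat.Partition.restricted n (· ≤ K)).card

lemma boundedCard_le (K n : ℕ) : (boundedCard K n : ℝ) ≤ p n :=
  Nat.cast_le.mpr (Finset.card_le_univ _)

lemma boundedCard_eq {K n : ℕ} (h : n ≤ K) : (boundedCard K n : ℝ) = p n := by
  rw [boundedCard, Nat.Partition.restricted, p, Finset.filter_true_of_mem, Finset.card_univ]
  exact fun x _ i hi => (Nat.Partition.le_of_mem_parts hi).trans h

lemma hasSum_boundedCard {z : ℂ} (hz : ‖z‖ < 1) (K : ℕ) :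
    HasSum (fun n => (boundedCard K n : ℂ) * z ^ n)
      (∏ i ∈ Finset.range K, (1 - z ^ (i + 1))⁻¹) := by
  have hprod := hasProd_prod_of_ne_finset_one (L := .unconditional ℕ) (s := Finset.range K)
    (f := fun i => if i + 1 ≤ K then ∑' j : ℕ, (X : PowerSeries ℂ) ^ ((i + 1) * j) else 1)
    fun i hi => if_neg (by simpa using hi)
  have hmk := (Nat.Partition.hasProd_powerSeriesMk_card_restricted ℂ (· ≤ K)).unique hprod
  rw [Finset.prod_congr rfl fun i hi => if_pos (Nat.succ_le_of_lt (Finset.mem_range.mp hi))] at hmk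
  have h := hasSum_coeff_prod_mul_pow (hasSum_coeff_tsum_X_pow_mul_pow hz) K
  rw [← hmk] at h
  simpa only [coeff_mk, boundedCard] using h

end GeneratingFunction

section LogGeneratingFunction

/-- The double series `∑_{j, k ≥ 1} exp (-j k s) / j`, the logarithm of the generating function of
partitions at `exp (-s)`. -/
noncomputable def logGen (s : ℂ) : ℂ :=
  ∑' x : ℕ × ℕ, Complex.exp (-(indexProd x * s)) / ((x.1 : ℂ) + 1)

lemma norm_logGen_term (s : ℂ) (x : ℕ × ℕ) :
    ‖Complex.exp (-(indexProd x * s)) / ((x.1 : ℂ) + 1)‖ = lambertWeight s.re x := by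
  rw [norm_div, Complex.norm_exp, lambertWeight, ← Nat.cast_add_one, ← Nat.cast_add_one,
    Complex.norm_natCast]
  simp

lemma summable_lambertWeight {t : ℝ} (ht : 0 < t) : Summable (lambertWeight t) := by
  simpa using summable_lambertSum 0 ht

lemma hasSum_logGen {s : ℂ} (hs : 0 < s.re) :
    HasSum (fun x : ℕ × ℕ => Complex.exp (-(indexProd x * s)) / ((x.1 : ℂ) + 1)) (logGen s) := by
  refine (Summable.of_norm ?_).hasSum
  simp_rw [norm_logGen_term]
  exact summable_lambertWeight hs

lemma continuous_logGen_line {t : ℝ} (ht : 0 < t) :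
    Continuous fun θ : ℝ => logGen (t - θ * Complex.I) := by
  refine continuous_tsum (fun x => by fun_prop) (summable_lambertWeight ht) fun x θ => ?_
  rw [norm_logGen_term]
  simp

lemma norm_exp_neg_lt_one {s : ℂ} (hs : 0 < s.re) : ‖Complex.exp (-s)‖ < 1 := by
  simpa [Complex.norm_exp] using hs

lemma hasSum_logGen_column {s : ℂ} (hs : 0 < s.re) (k : ℕ) :
    HasSum (fun j : ℕ => Complex.exp (-(indexProd (j, k) * s)) / ((j : ℂ) + 1))
      (-Complex.log (1 - Complex.exp (-s) ^ (k + 1))) := by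
  refine (Complex.hasSum_taylorSeries_neg_log'
    (norm_pow_succ_lt_one (norm_exp_neg_lt_one hs) k)).congr_fun fun j => ?_
  rw [← pow_mul, ← Complex.exp_nat_mul, indexProd]
  push_cast
  ring_nf

lemma tendsto_prod_logGen {s : ℂ} (hs : 0 < s.re) :
    Tendsto (fun K => ∏ i ∈ Finset.range K, (1 - Complex.exp (-s) ^ (i + 1))⁻¹) atTop
      (𝓝 (Complex.exp (logGen s))) := by
  have hswap : HasSum (fun x : ℕ × ℕ =>
      Complex.exp (-(indexProd x.swap * s)) / ((x.2 : ℂ) + 1)) (logGen s) :=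
    (Equiv.prodComm ℕ ℕ).hasSum_iff.mpr (hasSum_logGen hs)
  have h := (hswap.prod_fiberwise (hasSum_logGen_column hs)).tendsto_sum_nat
  refine ((Complex.continuous_exp.tendsto _).comp h).congr fun K => ?_
  rw [Function.comp, Complex.exp_sum]
  refine Finset.prod_congr rfl fun i _ => ?_
  rw [Complex.exp_neg, Complex.exp_log]
  refine sub_ne_zero.mpr fun h => ?_
  simpa [← h] using norm_pow_succ_lt_one (norm_exp_neg_lt_one hs) i

lemma p_pos (n : ℕ) : 0 < p n := Nat.cast_pos.mpr Fintype.card_pos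

lemma summable_p_mul_exp_pow {t : ℝ} (ht : 0 < t) :
    Summable fun n : ℕ => p n * exp (-t) ^ n := by
  have hs : 0 < (t : ℂ).re := by simpa using ht
  obtain ⟨C, hC⟩ := (tendsto_prod_logGen hs).norm.bddAbove_range
  refine summable_of_sum_range_le (c := C)
    (fun n => mul_nonneg (p_pos n).le (by positivity)) fun N => ?_
  have hbounded : HasSum (fun n => (boundedCard N n : ℝ) * exp (-t) ^ n)
      (∏ i ∈ Finset.range N, (1 - Complex.exp (-(t : ℂ)) ^ (i + 1))⁻¹).re := by
    refine (Complex.hasSum_re (hasSum_boundedCard (norm_exp_neg_lt_one hs) N)).congr_fun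
      fun n => ?_
    norm_cast
  calc ∑ n ∈ Finset.range N, p n * exp (-t) ^ n
      = ∑ n ∈ Finset.range N, (boundedCard N n : ℝ) * exp (-t) ^ n :=
        Finset.sum_congr rfl fun n hn => by rw [boundedCard_eq (Finset.mem_range.mp hn).le]
    _ ≤ _ := sum_le_hasSum _ (fun n _ => by positivity) hbounded
    _ ≤ _ := Complex.re_le_norm _
    _ ≤ C := hC ⟨N, rfl⟩

lemma norm_p_mul_exp_pow (s : ℂ) (n : ℕ) :
    ‖(p n : ℂ) * Complex.exp (-s) ^ n‖ = p n * exp (-s.re) ^ n := by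
  rw [norm_mul, norm_pow, Complex.norm_exp, Complex.neg_re, Complex.norm_real,
    norm_of_nonneg (p_pos n).le]

theorem hasSum_p_mul_exp_pow {s : ℂ} (hs : 0 < s.re) :
    HasSum (fun n : ℕ => (p n : ℂ) * Complex.exp (-s) ^ n) (Complex.exp (logGen s)) := by
  have hsum := summable_p_mul_exp_pow hs
  have hlim : Tendsto (fun K : ℕ => ∑' n : ℕ, (boundedCard K n : ℂ) * Complex.exp (-s) ^ n) atTop
      (𝓝 (∑' n : ℕ, (p n : ℂ) * Complex.exp (-s) ^ n)) := by
    refine tendsto_tsum_of_dominated_convergence hsum (fun n => ?_) (.of_forall fun K n => ?_)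
    · refine tendsto_const_nhds.congr' ?_
      filter_upwards [eventually_ge_atTop n] with K hK
      rw [← boundedCard_eq hK, Complex.ofReal_natCast]
    · rw [← norm_p_mul_exp_pow, norm_mul, norm_mul, Complex.norm_natCast, Complex.norm_real,
        norm_of_nonneg (p_pos n).le]
      gcongr
      exact boundedCard_le K n
  simp_rw [fun K => (hasSum_boundedCard (norm_exp_neg_lt_one hs) K).tsum_eq] at hlim
  rw [← tendsto_nhds_unique hlim (tendsto_prod_logGen hs)]
  refine (Summable.of_norm ?_).hasSum
  simp_rw [norm_p_mul_exp_pow]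
  exact hsum

lemma integral_exp_int_mul_I (k : ℤ) :
    ∫ θ in (-π)..π, Complex.exp (k * θ * Complex.I) = if k = 0 then 2 * (π : ℂ) else 0 := by
  split_ifs with h
  · simp only [h, Int.cast_zero, zero_mul, Complex.exp_zero, intervalIntegral.integral_const,
      Complex.real_smul]
    push_cast
    ring
  · have hk : (k : ℂ) * Complex.I ≠ 0 := by simp [h]
    have hperiod : Complex.exp (k * Complex.I * π) = Complex.exp (k * Complex.I * (-π : ℝ)) := by
      rw [Complex.exp_eq_exp_iff_exists_int]
      refine ⟨k, ?_⟩
      push_cast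
      ring
    simp_rw [mul_right_comm (k : ℂ) _ Complex.I]
    rw [integral_exp_mul_complex hk, hperiod, sub_self, zero_div]

lemma integral_mul_exp_neg_eq_coeff {c : ℕ → ℂ} {f : ℝ → ℂ} (hc : Summable fun n => ‖c n‖)
    (hf : ∀ θ : ℝ, HasSum (fun n : ℕ => c n * Complex.exp (n * θ * Complex.I)) (f θ)) (m : ℕ) :
    ∫ θ in (-π)..π, f θ * Complex.exp (-(m * θ * Complex.I)) = 2 * π * c m := by
  have hshift (n : ℕ) (θ : ℝ) :
      c n * Complex.exp (n * θ * Complex.I) * Complex.exp (-(m * θ * Complex.I)) =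
        c n * Complex.exp (((n - m : ℤ) : ℂ) * θ * Complex.I) := by
    rw [mul_assoc, ← Complex.exp_add]
    push_cast
    ring_nf
  have hnorm (n : ℕ) (θ : ℝ) :
      ‖c n * Complex.exp (((n - m : ℤ) : ℂ) * θ * Complex.I)‖ ≤ ‖c n‖ := by
    rw [norm_mul, Complex.norm_exp]
    simp
  have h := intervalIntegral.hasSum_integral_of_dominated_convergence
    (μ := MeasureTheory.volume) (a := -π) (b := π) (fun n _ => ‖c n‖)
    (fun n => (by fun_prop : Continuous fun θ : ℝ =>
      c n * Complex.exp (((n - m : ℤ) : ℂ) * θ * Complex.I)).aestronglyMeasurable)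
    (fun n => .of_forall fun θ _ => hnorm n θ) (.of_forall fun _ _ => hc) (by simp)
    (.of_forall fun θ _ => ((hf θ).mul_right _).congr_fun fun n => (hshift n θ).symm)
  simp_rw [intervalIntegral.integral_const_mul, integral_exp_int_mul_I] at h
  refine h.unique ((hasSum_ite_eq m (2 * π * c m)).congr_fun fun n => ?_)
  rcases eq_or_ne n m with rfl | hn
  · simp [mul_comm]
  · rw [if_neg (by omega), if_neg hn, mul_zero]

theorem integral_exp_logGen {t : ℝ} (ht : 0 < t) (m : ℕ) :
    ∫ θ in (-π)..π, Complex.exp (logGen (t - θ * Complex.I)) * Complex.exp (-(m * θ * Complex.I)) =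
      2 * π * (p m * Complex.exp (-t) ^ m) := by
  refine integral_mul_exp_neg_eq_coeff (c := fun n => p n * Complex.exp (-t) ^ n) ?_
    (fun θ => ?_) m
  · simpa only [norm_p_mul_exp_pow, Complex.ofReal_re] using summable_p_mul_exp_pow ht
  · refine (hasSum_p_mul_exp_pow (s := t - θ * Complex.I) (by simpa using ht)).congr_fun fun n => ?_
    rw [mul_assoc, ← Complex.exp_nat_mul, ← Complex.exp_nat_mul, ← Complex.exp_add]
    ring_nf

end LogGeneratingFunction

section TaylorExpansion

lemma hasDerivAt_exp_sub_sum (n : ℕ) (z : ℂ) :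
    HasDerivAt (fun z => Complex.exp z - ∑ m ∈ Finset.range (n + 1), z ^ m / m.factorial)
      (Complex.exp z - ∑ m ∈ Finset.range n, z ^ m / m.factorial) z := by
  have hterm (m : ℕ) :
      HasDerivAt (fun z : ℂ => z ^ (m + 1) / (m + 1).factorial) (z ^ m / m.factorial) z := by
    refine ((hasDerivAt_pow (m + 1) z).div_const ((m + 1).factorial : ℂ)).congr_deriv ?_
    rw [Nat.factorial_succ, Nat.cast_mul, add_tsub_cancel_right,
      mul_div_mul_left _ _ (Nat.cast_ne_zero.mpr m.succ_ne_zero)]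
  have hsum := HasDerivAt.fun_sum (u := Finset.range n) fun m _ => hterm m
  simp_rw [Finset.sum_range_succ' _ n, pow_zero]
  exact (Complex.hasDerivAt_exp z).sub (hsum.add_const _)

lemma norm_exp_sub_sum_le_of_re_nonpos (n : ℕ) {w : ℂ} (hw : w.re ≤ 0) :
    ‖Complex.exp w - ∑ m ∈ Finset.range n, w ^ m / m.factorial‖ ≤ ‖w‖ ^ n / n.factorial := by
  induction n generalizing w with
  | zero => simpa [Complex.norm_exp] using hw
  | succ n ih =>
    have hderiv (x : ℝ) := (hasDerivAt_exp_sub_sum n (x * w)).comp x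
      ((hasDerivAt_id (x : ℂ)).mul_const w).comp_ofReal
    have hbound (x : ℝ) : HasDerivAt (fun x : ℝ => (x * ‖w‖) ^ (n + 1) / (n + 1).factorial)
        ((x * ‖w‖) ^ n / n.factorial * ‖w‖) x := by
      refine ((((hasDerivAt_id x).mul_const ‖w‖).pow (n + 1)).div_const
        ((n + 1).factorial : ℝ)).congr_deriv ?_
      rw [Nat.factorial_succ, Nat.cast_mul, add_tsub_cancel_right, mul_assoc,
        mul_div_mul_left _ _ (Nat.cast_ne_zero.mpr n.succ_ne_zero), one_mul, id]
      ring
    have h := image_norm_le_of_norm_deriv_right_le_deriv_boundary (a := 0) (b := 1)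
      (fun x _ => (hderiv x).continuousAt.continuousWithinAt)
      (fun x _ => (hderiv x).hasDerivWithinAt) ?_ hbound (fun x hx => ?_)
      (Set.right_mem_Icc.mpr zero_le_one)
    · simpa using h
    · simp [Finset.sum_range_succ']
    · have hre : (x * w : ℂ).re ≤ 0 := by
        rw [Complex.re_ofReal_mul]
        exact mul_nonpos_of_nonneg_of_nonpos hx.1 hw
      rw [norm_mul, one_mul]
      gcongr
      simpa [abs_of_nonneg hx.1] using ih hre

lemma exp_indexProd_line (t θ : ℝ) (x : ℕ × ℕ) :
    Complex.exp (-(indexProd x * (t - θ * Complex.I))) / ((x.1 : ℂ) + 1) =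
      lambertWeight t x * Complex.exp ((indexProd x * θ : ℝ) * Complex.I) := by
  rw [lambertWeight]
  push_cast
  rw [div_mul_eq_mul_div, ← Complex.exp_add]
  ring_nf

lemma hasSum_logGen_line {t : ℝ} (ht : 0 < t) (θ : ℝ) :
    HasSum (fun x : ℕ × ℕ => lambertWeight t x * Complex.exp ((indexProd x * θ : ℝ) * Complex.I))
      (logGen (t - θ * Complex.I)) := by
  simp_rw [← exp_indexProd_line]
  exact hasSum_logGen (by simpa using ht)

theorem norm_logGen_line_sub_sum_le {t : ℝ} (ht : 0 < t) (θ : ℝ) (n : ℕ) :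
    ‖logGen (t - θ * Complex.I) -
        ∑ m ∈ Finset.range n, (θ * Complex.I) ^ m / m.factorial * lambertSum m t‖ ≤
      |θ| ^ n / n.factorial * lambertSum n t := by
  have hterm (m : ℕ) := (Complex.hasSum_ofReal.mpr (hasSum_lambertSum m ht)).mul_left
    ((θ * Complex.I) ^ m / m.factorial)
  have hbound := (hasSum_lambertSum n ht).mul_left (|θ| ^ n / n.factorial)
  refine ((hasSum_logGen_line ht θ).sub (hasSum_sum fun m _ => hterm m)).norm_le_of_bounded hbound
    fun x => ?_
  calc _ = ‖(lambertWeight t x : ℂ) * (Complex.exp ((indexProd x * θ : ℝ) * Complex.I) -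
        ∑ m ∈ Finset.range n, ((indexProd x * θ : ℝ) * Complex.I) ^ m / m.factorial)‖ := by
        rw [mul_sub, Finset.mul_sum]
        congr! 3 with m
        push_cast
        ring
    _ ≤ lambertWeight t x * (‖(indexProd x * θ : ℝ) * Complex.I‖ ^ n / n.factorial) := by
        rw [norm_mul, Complex.norm_real, norm_of_nonneg (lambertWeight_nonneg t x)]
        exact mul_le_mul_of_nonneg_left (norm_exp_sub_sum_le_of_re_nonpos n (by simp))
          (lambertWeight_nonneg t x)
    _ = _ := by
        rw [norm_mul, Complex.norm_real, Complex.norm_I, mul_one, norm_eq_abs, abs_mul,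
          abs_of_pos (indexProd_pos x)]
        ring

end TaylorExpansion

section Decay

lemma normSq_one_sub_mul_exp (r θ : ℝ) :
    Complex.normSq (1 - r * Complex.exp (θ * Complex.I)) =
      (1 - r) ^ 2 + 2 * (r * (1 - cos θ)) := by
  rw [Complex.normSq_apply]
  simp only [Complex.sub_re, Complex.sub_im, Complex.re_ofReal_mul, Complex.im_ofReal_mul,
    Complex.exp_ofReal_mul_I_re, Complex.exp_ofReal_mul_I_im, Complex.one_re, Complex.one_im]
  linear_combination r ^ 2 * sin_sq_add_cos_sq θ

lemma inv_one_sub_sub_re_inv {r : ℝ} (hr : 0 ≤ r) (hr1 : r < 1) (θ : ℝ) :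
    (1 - r)⁻¹ - (1 - r * Complex.exp (θ * Complex.I))⁻¹.re =
      r * (1 - cos θ) * (1 + r) / ((1 - r) * ((1 - r) ^ 2 + 2 * (r * (1 - cos θ)))) := by
  have hgap : 0 < 1 - r := sub_pos.mpr hr1
  have hdenom : 0 < (1 - r) ^ 2 + 2 * (r * (1 - cos θ)) := by
    have := mul_nonneg hr (sub_nonneg.mpr (cos_le_one θ))
    positivity
  rw [Complex.inv_re, normSq_one_sub_mul_exp, Complex.sub_re, Complex.re_ofReal_mul,
    Complex.exp_ofReal_mul_I_re, Complex.one_re, inv_eq_one_div,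
    div_sub_div _ _ hgap.ne' hdenom.ne']
  ring

lemma sq_div_twenty_le_exp_neg_mul_one_sub_cos {t θ : ℝ} (ht1 : t ≤ 1) (hθ : |θ| ≤ π) :
    θ ^ 2 / 20 ≤ exp (-t) * (1 - cos θ) := by
  have hexp : 1 / 4 ≤ exp (-t) := by
    have h : exp 1 ≤ 4 := by linarith [exp_one_lt_d9]
    calc (1 : ℝ) / 4 ≤ exp (-1) := by
          rw [exp_neg, one_div]
          gcongr
      _ ≤ exp (-t) := exp_le_exp.mpr (neg_le_neg ht1)
  have hcos : 1 / 5 * θ ^ 2 ≤ 1 - cos θ := by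
    have hπ : 1 / 5 ≤ 2 / π ^ 2 := by
      rw [div_le_div_iff₀ (by norm_num) (by positivity)]
      nlinarith [pi_lt_d2, pi_pos]
    linarith [cos_le_one_sub_mul_cos_sq hθ, mul_le_mul_of_nonneg_right hπ (sq_nonneg θ)]
  calc θ ^ 2 / 20 = 1 / 4 * (1 / 5 * θ ^ 2) := by ring
    _ ≤ exp (-t) * (1 - cos θ) := by gcongr

lemma sq_div_le_geometric_gap {t θ : ℝ} (ht : 0 < t) (ht1 : t ≤ 1) (hθ : |θ| ≤ π) :
    θ ^ 2 / (20 * (t * (t ^ 2 + θ ^ 2))) ≤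
      (1 - exp (-t))⁻¹ - (1 - exp (-t) * Complex.exp (θ * Complex.I))⁻¹.re := by
  have hr1 : exp (-t) < 1 := by simpa using ht
  have : 0 < 1 - exp (-t) := sub_pos.mpr hr1
  have hgap_le : 1 - exp (-t) ≤ t := by linarith [add_one_le_exp (-t)]
  have hb := sq_div_twenty_le_exp_neg_mul_one_sub_cos ht1 hθ
  rw [inv_one_sub_sub_re_inv (exp_pos _).le hr1]
  set b := exp (-t) * (1 - cos θ)
  have hb0 : 0 ≤ b := le_trans (by positivity) hb
  calc θ ^ 2 / (20 * (t * (t ^ 2 + θ ^ 2)))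
      ≤ b / (t * (t ^ 2 + 2 * b)) := by
        rw [div_le_div_iff₀ (by positivity) (by positivity)]
        nlinarith [mul_nonneg ht.le (mul_nonneg hb0 (sq_nonneg θ)),
          mul_le_mul_of_nonneg_left hb (pow_pos ht 3).le]
    _ ≤ b * (1 + exp (-t)) / ((1 - exp (-t)) * ((1 - exp (-t)) ^ 2 + 2 * b)) := by
        gcongr
        exact le_mul_of_one_le_right hb0 (by linarith [exp_pos (-t)])

lemma re_logGen_line_sub_le {t θ : ℝ} (ht : 0 < t) (ht1 : t ≤ 1) (hθ : |θ| ≤ π) :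
    (logGen (t - θ * Complex.I)).re - lambertSum 0 t ≤
      -(θ ^ 2 / (20 * (t * (t ^ 2 + θ ^ 2)))) := by
  have hr1 : ‖exp (-t)‖ < 1 := by simpa using ht
  have hz1 : ‖exp (-t) * Complex.exp (θ * Complex.I)‖ < 1 := by
    simpa [Complex.norm_exp] using ht
  have hall := (hasSum_lambertSum 0 ht).sub (Complex.hasSum_re (hasSum_logGen_line ht θ))
  -- All terms of the double series lose real part off the axis; the loss in the row `j = 1`, a
  -- geometric series, is already large enough.
  have hrow := (hasSum_nat_add_iff' 1).mpr ((hasSum_geometric_of_norm_lt_one hr1).sub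
    (Complex.hasSum_re (hasSum_geometric_of_norm_lt_one hz1)))
  rw [Finset.sum_range_one, pow_zero, pow_zero, Complex.one_re, sub_self, sub_zero] at hrow
  have hle := hasSum_le_inj (fun k : ℕ => ((0, k) : ℕ × ℕ)) (Prod.mk_right_injective 0)
    (fun x _ => ?_) (fun k => le_of_eq ?_) hrow hall
  · linarith [sq_div_le_geometric_gap ht ht1 hθ]
  · rw [pow_zero, one_mul, Complex.re_ofReal_mul, Complex.exp_ofReal_mul_I_re]
    linarith [mul_le_of_le_one_right (lambertWeight_nonneg t x) (cos_le_one (indexProd x * θ))]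
  · rw [pow_zero, one_mul, mul_pow, ← Complex.exp_nat_mul,
      ← Complex.ofReal_pow, ← exp_nat_mul, lambertWeight, indexProd]
    push_cast
    ring_nf

/- In the next two lemmas `v = u ^ 2` for the rescaled frequency `u`; the condition `v * t ^ 3 ≤ 10`
says that the original frequency is at most `π` in absolute value, up to a constant. -/
lemma one_add_le_mul_one_add_pow_three {t v : ℝ} (ht : 0 < t) (hv : 0 ≤ v)
    (hvt : v * t ^ 3 ≤ 10) :
    1 + v ≤ 640000 * (1 + v / (20 * (1 + v * t))) ^ 3 := by
  set E := v / (20 * (1 + v * t)) with hE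
  have hE0 : 0 ≤ E := by positivity
  have hvE : v = 20 * E * (1 + v * t) := by
    rw [hE]
    field_simp
  rcases le_total (v * t) 1 with h | h
  · nlinarith [pow_nonneg hE0 3, sq_nonneg E, mul_le_mul_of_nonneg_left h hE0]
  · have hEt : 1 ≤ 40 * E * t := by
      refine le_of_mul_le_mul_left ?_ (by linarith : 0 < 1 + v * t)
      linear_combination h + 2 * t * hvE
    have hvE3 : v ≤ 640000 * E ^ 3 := by
      calc v ≤ v * (40 * E * t) ^ 3 := le_mul_of_one_le_right hv (one_le_pow₀ hEt)
        _ = v * t ^ 3 * (64000 * E ^ 3) := by ring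
        _ ≤ 10 * (64000 * E ^ 3) := by gcongr
        _ = 640000 * E ^ 3 := by ring
    nlinarith [sq_nonneg E]

lemma exp_neg_div_le_of_mul_pow_three_le {t v : ℝ} (ht : 0 < t) (hv : 0 ≤ v)
    (hvt : v * t ^ 3 ≤ 10) :
    exp (-(v / (20 * (1 + v * t)))) ≤ 10 ^ 15 * ((1 + v)⁻¹) ^ 2 := by
  set E := v / (20 * (1 + v * t))
  have hE0 : 0 ≤ E := by positivity
  have h : (1 + v) ^ 2 ≤ 10 ^ 15 * exp E := by
    calc (1 + v) ^ 2 ≤ (640000 * (1 + E) ^ 3) ^ 2 := by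
          gcongr
          exact one_add_le_mul_one_add_pow_three ht hv hvt
      _ = 640000 ^ 2 * (1 + E) ^ 6 := by ring
      _ ≤ 640000 ^ 2 * (Nat.factorial 6 * exp 1 * exp E) := by
          gcongr
          exact one_add_pow_le_mul_exp 6 hE0
      _ = 640000 ^ 2 * (720 * exp 1) * exp E := by
          rw [show ((Nat.factorial 6 : ℕ) : ℝ) = 720 by norm_num [Nat.factorial]]
          ring
      _ ≤ 10 ^ 15 * exp E := by
          gcongr
          linarith [exp_one_lt_d9]
  rw [exp_neg, inv_pow, ← div_eq_mul_inv, le_div_iff₀ (by positivity), inv_mul_le_iff₀ (exp_pos E),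
    mul_comm (exp E)]
  exact h

end Decay

section CentralLimit

/-- Characteristic function of the centred Boltzmann distribution, which gives each partition of
`n` the probability `exp (-n * t - lambertSum 0 t)`; the mean size is `lambertSum 1 t`. -/
noncomputable def boltzmannCharFun (t θ : ℝ) : ℂ :=
  Complex.exp (logGen (t - θ * Complex.I) - lambertSum 0 t - θ * lambertSum 1 t * Complex.I)

/-- The frequency scale `t ^ (3 / 2)`, inverse to the order of the standard deviation of the
Boltzmann distribution. -/
noncomputable def scale (t : ℝ) : ℝ := t * √t

lemma scale_pos {t : ℝ} (ht : 0 < t) : 0 < scale t := mul_pos ht (sqrt_pos.mpr ht)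

lemma scale_sq {t : ℝ} (ht : 0 < t) : scale t ^ 2 = t ^ 3 := by
  rw [scale, mul_pow, sq_sqrt ht.le]
  ring

lemma tendsto_sqrt_nhdsGT_zero : Tendsto (fun t : ℝ => √t) (𝓝[>] 0) (𝓝 0) := by
  simpa using tendsto_id_nhdsGT_zero.sqrt

lemma tendsto_scale : Tendsto scale (𝓝[>] 0) (𝓝[>] 0) := by
  have h := tendsto_id_nhdsGT_zero.mul tendsto_sqrt_nhdsGT_zero
  rw [mul_zero] at h
  exact tendsto_nhdsWithin_iff.mpr ⟨h, eventually_mem_nhdsWithin.mono fun t ht => scale_pos ht⟩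

lemma continuous_boltzmannCharFun {t : ℝ} (ht : 0 < t) : Continuous (boltzmannCharFun t) := by
  have := continuous_logGen_line ht
  unfold boltzmannCharFun
  fun_prop

lemma norm_boltzmann_exponent_add_le {t : ℝ} (ht : 0 < t) (u : ℝ) :
    ‖logGen (t - (scale t * u : ℝ) * Complex.I) - lambertSum 0 t -
        (scale t * u : ℝ) * lambertSum 1 t * Complex.I +
        ((u ^ 2 / 2 * (t ^ (2 + 1) * lambertSum 2 t) : ℝ) : ℂ)‖ ≤
      |u| ^ 3 / 6 * √t * (t ^ (3 + 1) * lambertSum 3 t) := by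
  have h := norm_logGen_line_sub_sum_le ht (scale t * u) 3
  rw [Finset.sum_range_succ, Finset.sum_range_succ, Finset.sum_range_one] at h
  have hsq : ((scale t : ℝ) : ℂ) ^ 2 = (t : ℂ) ^ 3 := by exact_mod_cast scale_sq ht
  have hcube : scale t ^ 3 = t ^ 4 * √t := by
    rw [pow_succ, scale_sq ht, scale]
    ring
  refine (le_of_eq (congrArg _ ?_)).trans (h.trans_eq ?_)
  · push_cast [Nat.factorial]
    linear_combination (-(u : ℂ) ^ 2 * lambertSum 2 t / 2) * hsq +
      (scale t * u : ℂ) ^ 2 * lambertSum 2 t / 2 * Complex.I_sq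
  · rw [abs_mul, abs_of_pos (scale_pos ht), mul_pow, hcube]
    norm_num [Nat.factorial]
    ring

lemma tendsto_boltzmannCharFun (u : ℝ) :
    Tendsto (fun t => boltzmannCharFun t (scale t * u)) (𝓝[>] 0)
      (𝓝 (exp (-(π ^ 2 / 6) * u ^ 2) : ℝ)) := by
  have hquad := (tendsto_pow_mul_lambertSum 2).const_mul (u ^ 2 / 2)
  have herr := (tendsto_sqrt_nhdsGT_zero.const_mul (|u| ^ 3 / 6)).mul (tendsto_pow_mul_lambertSum 3)
  rw [mul_zero, zero_mul] at herr
  have hzero := squeeze_zero_norm' (eventually_nhdsWithin_of_forall fun t (ht : t ∈ Set.Ioi 0) =>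
    norm_boltzmann_exponent_add_le ht u) herr
  have hexponent := hzero.sub (Complex.continuous_ofReal.continuousAt.tendsto.comp hquad)
  rw [Complex.ofReal_exp]
  convert (Complex.continuous_exp.tendsto _).comp hexponent using 2 with t
  · simp only [Function.comp_apply, add_sub_cancel_right, boltzmannCharFun]
  · rw [zero_sub, ← Complex.ofReal_neg, Nat.factorial_two]
    push_cast
    ring_nf

lemma norm_boltzmannCharFun_le {t u : ℝ} (ht : 0 < t) (ht1 : t ≤ 1) (hu : |scale t * u| ≤ π) :
    ‖boltzmannCharFun t (scale t * u)‖ ≤ 10 ^ 15 * ((1 + u ^ 2)⁻¹) ^ 2 := by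
  have hsq : (scale t * u) ^ 2 = u ^ 2 * t ^ 3 := by rw [mul_pow, scale_sq ht, mul_comm]
  have hwindow : u ^ 2 * t ^ 3 ≤ 10 := by
    rw [← hsq, ← sq_abs]
    nlinarith [pi_lt_d2, pi_pos, abs_nonneg (scale t * u)]
  refine le_trans ?_ (exp_neg_div_le_of_mul_pow_three_le ht (sq_nonneg u) hwindow)
  have h := re_logGen_line_sub_le ht ht1 hu
  rw [hsq, show u ^ 2 * t ^ 3 / (20 * (t * (t ^ 2 + u ^ 2 * t ^ 3))) =
    u ^ 2 / (20 * (1 + u ^ 2 * t)) by field_simp] at h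
  rw [boltzmannCharFun, Complex.norm_exp]
  gcongr
  simpa using h

end CentralLimit

section LocalLimit

/-- The integral of the rescaled characteristic function over one period, against a weight. -/
noncomputable def windowIntegral (t : ℝ) (g : ℝ → ℂ) : ℂ :=
  ∫ u in (-(π / scale t))..(π / scale t), boltzmannCharFun t (scale t * u) * g u

lemma windowIntegral_sub {t : ℝ} (ht : 0 < t) {f g : ℝ → ℂ} (hf : Continuous f)
    (hg : Continuous g) :
    windowIntegral t (fun u => f u - g u) = windowIntegral t f - windowIntegral t g := by
  have := continuous_boltzmannCharFun ht
  simp_rw [windowIntegral, mul_sub]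
  exact intervalIntegral.integral_sub ((by fun_prop : Continuous _).intervalIntegrable _ _)
    ((by fun_prop : Continuous _).intervalIntegrable _ _)

lemma windowIntegral_div (t : ℝ) (g : ℝ → ℂ) (c : ℂ) :
    windowIntegral t (fun u => g u / c) = windowIntegral t g / c := by
  simp_rw [windowIntegral, mul_div_assoc']
  exact intervalIntegral.integral_div _ _

lemma windowIntegral_eq_integral_indicator {t : ℝ} (ht : 0 < t) (g : ℝ → ℂ) :
    windowIntegral t g = ∫ u : ℝ, (Set.Ioc (-(π / scale t)) (π / scale t)).indicator
      (fun u => boltzmannCharFun t (scale t * u) * g u) u := by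
  rw [MeasureTheory.integral_indicator measurableSet_Ioc, windowIntegral,
    intervalIntegral.integral_of_le (neg_le_self (div_pos pi_pos (scale_pos ht)).le)]

lemma norm_indicator_boltzmannCharFun_mul_le {t u : ℝ} (ht : 0 < t) (ht1 : t ≤ 1) {z : ℂ}
    (hz : ‖z‖ ≤ 1 + u ^ 2) :
    ‖(Set.Ioc (-(π / scale t)) (π / scale t)).indicator
      (fun u => boltzmannCharFun t (scale t * u) * z) u‖ ≤ 10 ^ 15 * (1 + u ^ 2)⁻¹ := by
  rw [Set.indicator_apply]
  split_ifs with hu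
  · have hs := scale_pos ht
    have hsu : |scale t * u| ≤ π := by
      rw [abs_mul, abs_of_pos hs, mul_comm, ← le_div_iff₀ hs]
      exact abs_le.mpr ⟨hu.1.le, hu.2⟩
    calc ‖boltzmannCharFun t (scale t * u) * z‖
        ≤ 10 ^ 15 * ((1 + u ^ 2)⁻¹) ^ 2 * (1 + u ^ 2) := by
          rw [norm_mul]
          gcongr
          exact norm_boltzmannCharFun_le ht ht1 hsu
      _ = 10 ^ 15 * (1 + u ^ 2)⁻¹ := by field_simp
  · rw [norm_zero]
    positivity

lemma tendsto_windowIntegral {g : ℝ → ℝ → ℂ} {g₀ : ℝ → ℂ} (hcont : ∀ t, Continuous (g t))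
    (hbound : ∀ t, 0 < t → ∀ u, ‖g t u‖ ≤ 1 + u ^ 2)
    (hlim : ∀ u, Tendsto (fun t => g t u) (𝓝[>] 0) (𝓝 (g₀ u))) :
    Tendsto (fun t => windowIntegral t (g t)) (𝓝[>] 0)
      (𝓝 (∫ u : ℝ, ((exp (-(π ^ 2 / 6) * u ^ 2) : ℝ) : ℂ) * g₀ u)) := by
  refine Tendsto.congr' (eventually_mem_nhdsWithin.mono fun t (ht : 0 < t) =>
    (windowIntegral_eq_integral_indicator ht (g t)).symm) ?_
  refine MeasureTheory.tendsto_integral_filter_of_dominated_convergence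
    (fun u => 10 ^ 15 * (1 + u ^ 2)⁻¹) ?_ ?_ (integrable_inv_one_add_sq.const_mul _)
    (.of_forall fun u => ?_)
  · filter_upwards [self_mem_nhdsWithin] with t ht
    have := continuous_boltzmannCharFun ht
    have := hcont t
    exact (by fun_prop : Continuous fun u => boltzmannCharFun t (scale t * u) * g t u)
      |>.aestronglyMeasurable.indicator measurableSet_Ioc
  · filter_upwards [Ioc_mem_nhdsGT one_pos] with t ht
    exact .of_forall fun u => norm_indicator_boltzmannCharFun_mul_le ht.1 ht.2 (hbound t ht.1 u)
  · have htop : Tendsto (fun t => π / scale t) (𝓝[>] 0) atTop :=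
      (tendsto_inv_nhdsGT_zero.comp tendsto_scale).const_mul_atTop pi_pos
    refine ((tendsto_boltzmannCharFun u).mul (hlim u)).congr' ?_
    filter_upwards [htop.eventually_gt_atTop |u|] with t ht
    have hu := abs_lt.mp ht
    rw [Set.indicator_of_mem (Set.mem_Ioc.mpr ⟨hu.1, hu.2.le⟩)]

end LocalLimit

section GaussianMoments

lemma hasDerivAt_exp_neg_mul_sq (b u : ℝ) :
    HasDerivAt (fun u : ℝ => exp (-b * u ^ 2)) (exp (-b * u ^ 2) * (-b * (2 * u))) u := by
  simpa using ((hasDerivAt_pow 2 u).const_mul (-b)).exp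

lemma integrable_sq_mul_exp_neg_mul_sq {b : ℝ} (hb : 0 < b) :
    MeasureTheory.Integrable fun u : ℝ => u ^ 2 * exp (-b * u ^ 2) := by
  simpa using integrable_rpow_mul_exp_neg_mul_sq hb (s := 2) (by norm_num)

lemma integral_sq_mul_exp_neg_mul_sq {b : ℝ} (hb : 0 < b) :
    ∫ u : ℝ, u ^ 2 * exp (-b * u ^ 2) = √(π / b) / (2 * b) := by
  have hmass := integrable_exp_neg_mul_sq hb
  have hmoment := (integrable_sq_mul_exp_neg_mul_sq hb).const_mul (2 * b)
  have hderiv (u : ℝ) : HasDerivAt (fun u : ℝ => u * exp (-b * u ^ 2))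
      (exp (-b * u ^ 2) - 2 * b * (u ^ 2 * exp (-b * u ^ 2))) u :=
    ((hasDerivAt_id u).mul (hasDerivAt_exp_neg_mul_sq b u)).congr_deriv (by rw [id]; ring)
  have h := MeasureTheory.integral_eq_zero_of_hasDerivAt_of_integrable hderiv (hmass.sub hmoment)
    (integrable_mul_exp_neg_mul_sq hb)
  rw [MeasureTheory.integral_sub hmass hmoment, integral_gaussian,
    MeasureTheory.integral_const_mul] at h
  rw [eq_div_iff (by positivity)]
  linarith

end GaussianMoments

section LocalFactor

/-- The total mass of the limiting density `exp (-(π ^ 2 / 6) * u ^ 2)`. -/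
noncomputable def gaussMass : ℝ := √(π / (π ^ 2 / 6))

lemma gaussMass_pos : 0 < gaussMass := by
  unfold gaussMass
  positivity

/-- The factor of `p m`, for `m = lambertSum 1 t + k`, which is left after division by the
saddle-point main term. -/
noncomputable def localFactor (t k : ℝ) : ℝ :=
  (windowIntegral t fun u => Complex.exp (-(k * (scale t * u : ℝ) * Complex.I))).re

lemma tendsto_sin_mul_div (u : ℝ) : Tendsto (fun x => sin (x * u) / x) (𝓝[>] 0) (𝓝 u) := by
  have h : HasDerivAt (fun x : ℝ => sin (x * u)) u 0 := by
    simpa using ((hasDerivAt_id (0 : ℝ)).mul_const u).sin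
  simpa [div_eq_inv_mul] using h.tendsto_slope_zero_right

lemma abs_sin_mul_div_le (x u : ℝ) : |sin (x * u) / x| ≤ |u| := by
  rw [abs_div]
  refine div_le_of_le_mul₀ (abs_nonneg x) (abs_nonneg u) ?_
  rw [mul_comm |u|, ← abs_mul]
  exact abs_sin_le_abs

lemma exp_neg_mul_I_sub_exp_mul_I (θ : ℝ) :
    Complex.exp (-(θ * Complex.I)) - Complex.exp (θ * Complex.I) =
      (-2 * sin θ : ℝ) * Complex.I := by
  rw [Complex.ofReal_mul, Complex.ofReal_sin, Complex.sin]
  push_cast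
  ring_nf
  rw [Complex.I_sq]
  ring

lemma exp_mul_I_second_diff (θ : ℝ) :
    Complex.exp (-(θ * Complex.I)) - 1 - (1 - Complex.exp (θ * Complex.I)) =
      (-(2 * sin (θ / 2)) ^ 2 : ℝ) := by
  have h : -(2 * sin (θ / 2)) ^ 2 = 2 * cos θ - 2 := by
    rw [mul_pow, sin_sq_eq_half_sub, mul_div_cancel₀ θ two_ne_zero]
    ring
  rw [h, Complex.ofReal_sub, Complex.ofReal_mul, Complex.ofReal_cos, Complex.cos]
  push_cast
  ring_nf

lemma tendsto_localFactor (k : ℝ) :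
    Tendsto (fun t => localFactor t k) (𝓝[>] 0) (𝓝 gaussMass) := by
  have hscale := tendsto_scale.mono_right nhdsWithin_le_nhds
  have h := tendsto_windowIntegral (g₀ := fun _ => 1)
    (g := fun t u => Complex.exp (-(k * (scale t * u : ℝ) * Complex.I)))
    (fun t => by fun_prop) (fun t _ u => by simpa [Complex.norm_exp] using sq_nonneg u)
    (fun u => by
      have hcont : Continuous fun x : ℝ => Complex.exp (-(k * (x * u : ℝ) * Complex.I)) := by
        fun_prop
      simpa [Function.comp_def] using (hcont.tendsto 0).comp hscale)
  simp_rw [mul_one] at h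
  rw [integral_complex_ofReal, integral_gaussian] at h
  exact (Complex.continuous_re.tendsto _).comp h

lemma localFactor_diff_eq_windowIntegral {t : ℝ} (ht : 0 < t) :
    (localFactor t 1 - localFactor t (-1)) / scale t =
      (windowIntegral t fun u => (-2 * (sin (scale t * u) / scale t) : ℝ) * Complex.I).re := by
  rw [localFactor, localFactor, ← Complex.sub_re,
    ← windowIntegral_sub ht (by fun_prop) (by fun_prop), ← Complex.div_ofReal_re,
    ← windowIntegral_div]
  congr 2 with u
  simp only [Complex.ofReal_one, Complex.ofReal_neg, one_mul, neg_mul, neg_neg]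
  rw [exp_neg_mul_I_sub_exp_mul_I]
  push_cast
  ring

lemma tendsto_diff_localFactor :
    Tendsto (fun t => (localFactor t 1 - localFactor t (-1)) / scale t) (𝓝[>] 0) (𝓝 0) := by
  have h := tendsto_windowIntegral (g₀ := fun u => (-2 * u : ℝ) * Complex.I)
    (g := fun t u => (-2 * (sin (scale t * u) / scale t) : ℝ) * Complex.I)
    (fun t => by fun_prop)
    (fun t _ u => by
      rw [norm_mul, Complex.norm_I, mul_one, Complex.norm_real, norm_eq_abs, abs_mul, abs_neg,
        abs_two]
      nlinarith [abs_sin_mul_div_le (scale t) u, sq_nonneg (|u| - 1), sq_abs u])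
    (fun u => ((Complex.continuous_ofReal.tendsto _).comp
      (((tendsto_sin_mul_div u).comp tendsto_scale).const_mul (-2))).mul_const _)
  simp_rw [← mul_assoc, ← Complex.ofReal_mul] at h
  rw [MeasureTheory.integral_mul_const, integral_complex_ofReal] at h
  have hre := (Complex.continuous_re.tendsto _).comp h
  rw [Complex.re_ofReal_mul, Complex.I_re, mul_zero] at hre
  exact hre.congr' (eventually_nhdsWithin_of_forall fun t (ht : t ∈ Set.Ioi 0) =>
    (localFactor_diff_eq_windowIntegral ht).symm)

lemma localFactor_second_diff_eq_windowIntegral {t : ℝ} (ht : 0 < t) :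
    (localFactor t 1 + localFactor t (-1) - 2 * localFactor t 0) / scale t ^ 2 =
      (windowIntegral t fun u =>
        ((-(2 * (sin (scale t * (u / 2)) / scale t)) ^ 2 : ℝ) : ℂ)).re := by
  have hsplit : localFactor t 1 + localFactor t (-1) - 2 * localFactor t 0 =
      localFactor t 1 - localFactor t 0 - (localFactor t 0 - localFactor t (-1)) := by ring
  rw [hsplit]
  simp only [localFactor]
  rw [← Complex.sub_re, ← Complex.sub_re, ← Complex.sub_re,
    ← windowIntegral_sub ht (by fun_prop) (by fun_prop),
    ← windowIntegral_sub ht (by fun_prop) (by fun_prop),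
    ← windowIntegral_sub ht (by fun_prop) (by fun_prop), ← Complex.div_ofReal_re,
    ← windowIntegral_div]
  congr 2 with u
  simp only [Complex.ofReal_one, Complex.ofReal_zero, Complex.ofReal_neg, one_mul, zero_mul,
    neg_mul, neg_neg, neg_zero, Complex.exp_zero]
  rw [exp_mul_I_second_diff, mul_div_assoc]
  push_cast
  ring

lemma tendsto_second_diff_localFactor :
    Tendsto (fun t => (localFactor t 1 + localFactor t (-1) - 2 * localFactor t 0) / scale t ^ 2)
      (𝓝[>] 0) (𝓝 (gaussMass * (-3 / π ^ 2))) := by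
  have h := tendsto_windowIntegral (g₀ := fun u => ((-u ^ 2 : ℝ) : ℂ))
    (g := fun t u => ((-(2 * (sin (scale t * (u / 2)) / scale t)) ^ 2 : ℝ) : ℂ))
    (fun t => by fun_prop)
    (fun t _ u => by
      rw [Complex.norm_real, norm_neg, norm_pow, norm_mul, norm_two, norm_eq_abs]
      have hsin := abs_sin_mul_div_le (scale t) (u / 2)
      rw [abs_div u, abs_two] at hsin
      nlinarith [sq_abs u, abs_nonneg (sin (scale t * (u / 2)) / scale t)])
    (fun u => (Complex.continuous_ofReal.tendsto _).comp (by
      simpa [Function.comp_def, mul_div_cancel₀] using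
        ((((tendsto_sin_mul_div (u / 2)).comp tendsto_scale).const_mul 2).pow 2).neg))
  simp_rw [← Complex.ofReal_mul] at h
  rw [integral_complex_ofReal] at h
  have hmoment : ∫ u : ℝ, exp (-(π ^ 2 / 6) * u ^ 2) * -u ^ 2 = gaussMass * (-3 / π ^ 2) := by
    simp_rw [mul_neg, mul_comm (exp _)]
    rw [MeasureTheory.integral_neg, integral_sq_mul_exp_neg_mul_sq (by positivity), gaussMass]
    field_simp
    ring
  rw [hmoment] at h
  exact ((Complex.continuous_re.tendsto _).comp h).congr' (eventually_nhdsWithin_of_forall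
    fun t (ht : t ∈ Set.Ioi 0) => (localFactor_second_diff_eq_windowIntegral ht).symm)

end LocalFactor

section SaddlePoint

lemma exp_logGen_mul_exp_eq {t k : ℝ} {m : ℕ} (hm : (m : ℝ) = lambertSum 1 t + k) (θ : ℝ) :
    Complex.exp (logGen (t - θ * Complex.I)) * Complex.exp (-(m * θ * Complex.I)) =
      exp (lambertSum 0 t) * (boltzmannCharFun t θ * Complex.exp (-(k * θ * Complex.I))) := by
  have hmc : (m : ℂ) = lambertSum 1 t + k := by exact_mod_cast hm
  rw [boltzmannCharFun, hmc, Complex.ofReal_exp, ← Complex.exp_add, ← Complex.exp_add,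
    ← Complex.exp_add]
  ring_nf

lemma integral_boltzmannCharFun_mul {t : ℝ} (ht : 0 < t) (g : ℝ → ℂ) :
    ∫ θ in (-π)..π, boltzmannCharFun t θ * g θ =
      scale t * windowIntegral t fun u => g (scale t * u) := by
  have hs := scale_pos ht
  have h := intervalIntegral.smul_integral_comp_mul_left (a := -(π / scale t)) (b := π / scale t)
    (fun θ => boltzmannCharFun t θ * g θ) (scale t)
  rw [mul_neg, mul_div_cancel₀ π hs.ne'] at h
  rw [← h, Complex.real_smul, windowIntegral]

theorem p_eq_mul_localFactor {t : ℝ} (ht : 0 < t) {k : ℝ} {m : ℕ}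
    (hm : (m : ℝ) = lambertSum 1 t + k) :
    p m = exp (m * t + lambertSum 0 t) * (scale t / (2 * π)) * localFactor t k := by
  have h := integral_exp_logGen ht m
  simp_rw [exp_logGen_mul_exp_eq hm] at h
  rw [intervalIntegral.integral_const_mul,
    integral_boltzmannCharFun_mul ht (fun θ => Complex.exp (-(k * θ * Complex.I)))] at h
  have hre := congrArg Complex.re h
  rw [Complex.re_ofReal_mul, Complex.re_ofReal_mul, ← localFactor] at hre
  have hcoeff : (2 * π * (p m * Complex.exp (-t) ^ m)).re = 2 * π * (p m * exp (-t) ^ m) := by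
    norm_cast
  rw [hcoeff, ← exp_nat_mul, mul_neg, exp_neg] at hre
  rw [exp_add]
  field_simp at hre ⊢
  linarith

lemma localFactor_pos {t : ℝ} (ht : 0 < t) {k : ℝ} {m : ℕ} (hm : (m : ℝ) = lambertSum 1 t + k) :
    0 < localFactor t k := by
  have h := p_pos m
  rw [p_eq_mul_localFactor ht hm] at h
  exact pos_of_mul_pos_right h (mul_pos (exp_pos _) (div_pos (scale_pos ht) two_pi_pos)).le

theorem log_p_eq {t : ℝ} (ht : 0 < t) {k : ℝ} {m : ℕ} (hm : (m : ℝ) = lambertSum 1 t + k) :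
    log (p m) = m * t + lambertSum 0 t + log (scale t / (2 * π)) + log (localFactor t k) := by
  have hs := div_pos (scale_pos ht) two_pi_pos
  rw [p_eq_mul_localFactor ht hm, log_mul (by positivity) (localFactor_pos ht hm).ne',
    log_mul (by positivity) hs.ne', log_exp]

end SaddlePoint

section LogDifferences

lemma tendsto_sub_div_of_hasStrictDerivAt {ι : Type*} {l : Filter ι} {f : ℝ → ℝ} {f' m d : ℝ}
    {x y s : ι → ℝ} (hf : HasStrictDerivAt f f' m) (hx : Tendsto x l (𝓝 m))
    (hy : Tendsto y l (𝓝 m)) (hd : Tendsto (fun i => (x i - y i) / s i) l (𝓝 d)) :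
    Tendsto (fun i => (f (x i) - f (y i)) / s i) l (𝓝 (f' * d)) := by
  have herr := (hf.isLittleO.comp_tendsto (hx.prodMk_nhds hy)).tendsto_div_nhds_zero
  have h := (herr.mul hd).add (hd.const_mul f')
  rw [zero_mul, zero_add] at h
  refine h.congr fun i => ?_
  simp only [Function.comp_apply, ContinuousLinearMap.toSpanSingleton_apply, smul_eq_mul]
  rcases eq_or_ne (x i) (y i) with hxy | hxy
  · simp [hxy]
  · rw [div_mul_div_cancel₀ (sub_ne_zero.mpr hxy)]
    ring

lemma tendsto_second_diff_log {ι : Type*} {l : Filter ι} {q₁ q₂ q₀ s : ι → ℝ} {m c d : ℝ}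
    (hm : m ≠ 0) (h₁ : Tendsto q₁ l (𝓝 m)) (h₂ : Tendsto q₂ l (𝓝 m)) (h₀ : Tendsto q₀ l (𝓝 m))
    (hd : Tendsto (fun i => (q₁ i - q₂ i) / s i) l (𝓝 d))
    (hc : Tendsto (fun i => (q₁ i + q₂ i - 2 * q₀ i) / s i ^ 2) l (𝓝 c)) :
    Tendsto (fun i => (log (q₁ i) + log (q₂ i) - 2 * log (q₀ i)) / s i ^ 2) l
      (𝓝 ((m ^ 2)⁻¹ * (m * c - d ^ 2 / 4))) := by
  have hgap : Tendsto (fun i => q₁ i + q₂ i - 2 * q₀ i) l (𝓝 0) := by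
    convert (h₁.add h₂).sub (h₀.const_mul 2) using 2
    ring
  have hprod : Tendsto (fun i => (q₁ i * q₂ i - q₀ i ^ 2) / s i ^ 2) l
      (𝓝 (m * c - d ^ 2 / 4)) := by
    convert ((h₀.add (hgap.div_const 4)).mul hc).sub ((hd.pow 2).div_const 4) using 2
    · ring
    · ring
  have h₁₂ := h₁.mul h₂
  rw [← sq] at h₁₂
  refine (tendsto_sub_div_of_hasStrictDerivAt (hasStrictDerivAt_log (pow_ne_zero 2 hm)) h₁₂
    (h₀.pow 2) hprod).congr' ?_
  filter_upwards [h₁.eventually_ne hm, h₂.eventually_ne hm] with i hi₁ hi₂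
  rw [log_mul hi₁ hi₂, log_pow, Nat.cast_ofNat]

lemma tendsto_diff_log_localFactor :
    Tendsto (fun t => (log (localFactor t 1) - log (localFactor t (-1))) / t) (𝓝[>] 0) (𝓝 0) := by
  have h := (tendsto_sub_div_of_hasStrictDerivAt (hasStrictDerivAt_log gaussMass_pos.ne')
    (tendsto_localFactor 1) (tendsto_localFactor (-1)) tendsto_diff_localFactor).mul
    tendsto_sqrt_nhdsGT_zero
  rw [mul_zero] at h
  refine h.congr' ?_
  filter_upwards [self_mem_nhdsWithin] with t (ht : 0 < t)
  rw [scale]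
  field_simp

lemma tendsto_second_diff_log_localFactor :
    Tendsto (fun t => (log (localFactor t 1) + log (localFactor t (-1)) -
      2 * log (localFactor t 0)) / t ^ 3) (𝓝[>] 0) (𝓝 (-3 / π ^ 2)) := by
  have hm := gaussMass_pos
  have h := tendsto_second_diff_log hm.ne' (tendsto_localFactor 1) (tendsto_localFactor (-1))
    (tendsto_localFactor 0) tendsto_diff_localFactor tendsto_second_diff_localFactor
  convert h.congr' (eventually_nhdsWithin_of_forall fun t (ht : t ∈ Set.Ioi 0) => ?_) using 2
  · field_simp
    ring
  · rw [scale_sq ht]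

end LogDifferences

section SaddleSequence

lemma tendsto_lambertSum_one_atTop : Tendsto (lambertSum 1) (𝓝[>] 0) atTop := by
  have h := tendsto_inv_nhdsGT_zero.comp (tendsto_nhdsWithin_iff.mpr
    ⟨by simpa using tendsto_id_nhdsGT_zero.pow 2, eventually_nhdsWithin_of_forall
      fun t (ht : t ∈ Set.Ioi (0 : ℝ)) => pow_pos ht 2⟩)
  refine (h.atTop_mul_pos (by positivity) (tendsto_pow_mul_lambertSum 1)).congr' ?_
  filter_upwards [self_mem_nhdsWithin] with t (ht : 0 < t)
  rw [Function.comp_apply, inv_mul_cancel_left₀ (by positivity)]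

lemma exists_lambertSum_one_eq {x : ℝ} (hx : lambertSum 1 1 ≤ x) :
    ∃ t, 0 < t ∧ lambertSum 1 t = x := by
  obtain ⟨ε, hε, hε0, hε1⟩ := ((tendsto_lambertSum_one_atTop.eventually_ge_atTop x).and
    (Ioc_mem_nhdsGT one_pos)).exists
  have hcont : ContinuousOn (lambertSum 1) (Set.Icc ε 1) :=
    (continuousOn_lambertSum 1).mono fun t ht => hε0.trans_le ht.1
  obtain ⟨t, ht, h⟩ := intermediate_value_Icc' hε1 hcont ⟨hx, hε⟩
  exact ⟨t, hε0.trans_le ht.1, h⟩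

/-- The parameters `t n` are saddle points for `p n`: the Boltzmann distribution of parameter `t n`
has mean size `n`, for all large `n`. -/
structure IsSaddleSequence (t : ℕ → ℝ) : Prop where
  tendsto : Tendsto t atTop (𝓝[>] 0)
  eventually_eq : ∀ᶠ n in atTop, lambertSum 1 (t n) = n

lemma IsSaddleSequence.eventually_pos {t : ℕ → ℝ} (ht : IsSaddleSequence t) :
    ∀ᶠ n in atTop, 0 < t n :=
  ht.tendsto.eventually self_mem_nhdsWithin

lemma exists_isSaddleSequence : ∃ t, IsSaddleSequence t := by
  choose! t ht using fun (n : ℕ) (hn : lambertSum 1 1 ≤ n) => exists_lambertSum_one_eq hn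
  have hev : ∀ᶠ n : ℕ in atTop, 0 < t n ∧ lambertSum 1 (t n) = n :=
    (tendsto_natCast_atTop_atTop.eventually_ge_atTop (lambertSum 1 1)).mono ht
  refine ⟨t, tendsto_nhdsWithin_iff.mpr ⟨?_, hev.mono fun n hn => hn.1⟩, hev.mono fun n hn => hn.2⟩
  have hzero := (tendsto_const_div_atTop_nhds_zero_nat
    (π ^ 2 / 6 * (Nat.factorial 1 * (Nat.factorial (1 + 1) * exp 1)))).sqrt
  rw [sqrt_zero] at hzero
  refine squeeze_zero' (hev.mono fun n hn => hn.1.le) ?_ hzero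
  filter_upwards [hev, eventually_gt_atTop 0] with n ⟨hpos, heq⟩ hn
  refine le_sqrt_of_sq_le ((le_div_iff₀ (Nat.cast_pos.mpr hn)).mpr ?_)
  rw [← heq]
  exact pow_mul_lambertSum_le 1 hpos

lemma IsSaddleSequence.tendsto_rpow_mul {t : ℕ → ℝ} (ht : IsSaddleSequence t) :
    Tendsto (fun n : ℕ => (n : ℝ) ^ (1 / 2 : ℝ) * t n) atTop (𝓝 (π / √6)) := by
  have h := ((tendsto_pow_mul_lambertSum 1).comp ht.tendsto).sqrt
  rw [Nat.factorial_one, Nat.cast_one, mul_one, sqrt_div (sq_nonneg π), sqrt_sq pi_pos.le] at h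
  refine h.congr' ?_
  filter_upwards [ht.eventually_pos, ht.eventually_eq] with n hpos heq
  rw [Function.comp_apply, heq, sqrt_mul (sq_nonneg (t n)), sqrt_sq hpos.le, sqrt_eq_rpow, mul_comm]

end SaddleSequence

section LogAsymptotics

lemma tendsto_mul_log_scale :
    Tendsto (fun t => t * log (scale t / (2 * π))) (𝓝[>] 0) (𝓝 0) := by
  have h := ((tendsto_log_mul_rpow_nhdsGT_zero zero_lt_one).const_mul (3 / 2)).sub
    (tendsto_id_nhdsGT_zero.mul_const (log (2 * π)))
  rw [mul_zero, zero_mul, sub_zero] at h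
  refine h.congr' ?_
  filter_upwards [self_mem_nhdsWithin] with t (ht : 0 < t)
  rw [log_div (scale_pos ht).ne' two_pi_pos.ne', scale, log_mul ht.ne' (sqrt_pos.mpr ht).ne',
    log_sqrt ht.le, rpow_one]
  ring

lemma IsSaddleSequence.tendsto_mul_log_p {t : ℕ → ℝ} (ht : IsSaddleSequence t) :
    Tendsto (fun n => t n * log (p n)) atTop (𝓝 (π ^ 2 / 3)) := by
  have hfactor := tendsto_id_nhdsGT_zero.mul ((tendsto_localFactor 0).log gaussMass_pos.ne')
  have h := ((((tendsto_pow_mul_lambertSum 1).add (tendsto_pow_mul_lambertSum 0)).add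
    tendsto_mul_log_scale).add hfactor).comp ht.tendsto
  refine (h.congr' ?_).trans (le_of_eq (congrArg 𝓝 ?_))
  · filter_upwards [ht.eventually_pos, ht.eventually_eq] with n hpos heq
    rw [log_p_eq hpos (k := 0) (by rw [heq, add_zero]), ← heq, Function.comp_apply]
    ring
  · rw [Nat.factorial_one, Nat.factorial_zero]
    ring

theorem tendsto_log_p :
    Tendsto (fun n : ℕ => (n : ℝ) ^ (-(1 / 2) : ℝ) * log (p n)) atTop (𝓝 (2 * (π / √6))) := by
  obtain ⟨t, ht⟩ := exists_isSaddleSequence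
  refine ((ht.tendsto_mul_log_p.div ht.tendsto_rpow_mul (by positivity)).congr' ?_).trans
    (le_of_eq (congrArg 𝓝 ?_))
  · filter_upwards [ht.eventually_pos] with n hpos
    rw [Pi.div_apply, mul_comm (t n), mul_div_mul_right _ _ hpos.ne', rpow_neg n.cast_nonneg,
      div_eq_inv_mul]
  · field_simp
    rw [sq_sqrt (by norm_num)]
    norm_num

lemma log_p_neighbours {t : ℝ} (ht : 0 < t) {n : ℕ} (hn : 1 ≤ n) (h : lambertSum 1 t = n) :
    log (p (n + 1)) - log (p (n - 1)) =
        2 * t + (log (localFactor t 1) - log (localFactor t (-1))) ∧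
      log (p (n + 1)) + log (p (n - 1)) - 2 * log (p n) =
        log (localFactor t 1) + log (localFactor t (-1)) - 2 * log (localFactor t 0) := by
  have hcast : ((n - 1 : ℕ) : ℝ) = n - 1 := Nat.cast_pred hn
  rw [log_p_eq ht (m := n + 1) (k := 1) (by rw [h, Nat.cast_succ]),
    log_p_eq ht (m := n - 1) (k := -1) (by rw [h, hcast, sub_eq_add_neg]),
    log_p_eq ht (m := n) (k := 0) (by rw [h, add_zero]), hcast, Nat.cast_succ]
  constructor <;> ring

theorem tendsto_diff_log_p :
    Tendsto (fun n : ℕ => (n : ℝ) ^ (1 / 2 : ℝ) * (log (p (n + 1)) - log (p (n - 1)))) atTop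
      (𝓝 (2 * (π / √6))) := by
  obtain ⟨t, ht⟩ := exists_isSaddleSequence
  have h := ht.tendsto_rpow_mul.mul ((tendsto_diff_log_localFactor.comp ht.tendsto).const_add 2)
  rw [add_zero, mul_comm] at h
  refine h.congr' ?_
  filter_upwards [ht.eventually_pos, ht.eventually_eq, eventually_ge_atTop 1] with n hpos heq hn
  rw [(log_p_neighbours hpos hn heq).1, Function.comp_apply]
  field_simp

theorem tendsto_second_diff_log_p :
    Tendsto (fun n : ℕ =>
        (n : ℝ) ^ (3 / 2 : ℝ) * (log (p (n + 1)) + log (p (n - 1)) - 2 * log (p n))) atTop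
      (𝓝 (-(π / √6) / 2)) := by
  obtain ⟨t, ht⟩ := exists_isSaddleSequence
  refine (((ht.tendsto_rpow_mul.pow 3).mul
    (tendsto_second_diff_log_localFactor.comp ht.tendsto)).congr' ?_).trans
    (le_of_eq (congrArg 𝓝 ?_))
  · filter_upwards [ht.eventually_pos, ht.eventually_eq, eventually_ge_atTop 1] with n hpos heq hn
    rw [(log_p_neighbours hpos hn heq).2, Function.comp_apply, mul_pow, ← rpow_mul_natCast
      n.cast_nonneg, mul_assoc, mul_div_cancel₀ _ (pow_ne_zero 3 hpos.ne')]
    norm_num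
  · field_simp
    rw [sq_sqrt (by norm_num)]
    norm_num

lemma tendsto_second_diff_div_nat {f : ℕ → ℝ} {s α β γ : ℝ}
    (hα : Tendsto (fun n : ℕ => (n : ℝ) ^ (-s) * f n) atTop (𝓝 α))
    (hβ : Tendsto (fun n : ℕ => (n : ℝ) ^ (1 - s) * (f (n + 1) - f (n - 1))) atTop (𝓝 β))
    (hγ : Tendsto (fun n : ℕ => (n : ℝ) ^ (2 - s) * (f (n + 1) + f (n - 1) - 2 * f n)) atTop
      (𝓝 γ)) :
    Tendsto (fun n : ℕ => (n : ℝ) ^ (3 - s) *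
      (f (n + 1) / ((n : ℝ) + 1) + f (n - 1) / ((n : ℝ) - 1) - 2 * f n / (n : ℝ))) atTop
      (𝓝 (γ - β + 2 * α)) := by
  have hinv := (tendsto_inv_atTop_nhds_zero_nat (𝕜 := ℝ)).pow 2
  have h := ((hγ.sub hβ).add (hα.const_mul 2)).div (hinv.const_sub 1) (by norm_num)
  rw [zero_pow two_ne_zero, sub_zero, div_one] at h
  refine h.congr' ?_
  filter_upwards [eventually_gt_atTop 1] with n hn
  have hn1 : (1 : ℝ) < n := Nat.one_lt_cast.mpr hn
  have hn0 : (0 : ℝ) < n := one_pos.trans hn1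
  have hsub : (n : ℝ) - 1 ≠ 0 := (sub_pos.mpr hn1).ne'
  have hsq : (n : ℝ) ^ 2 - 1 ≠ 0 := (sub_pos.mpr (one_lt_pow₀ hn1 two_ne_zero)).ne'
  have hpow (k : ℕ) : (n : ℝ) ^ ((k : ℝ) - s) = (n : ℝ) ^ k * (n : ℝ) ^ (-s) := by
    rw [sub_eq_add_neg, rpow_add hn0, rpow_natCast]
  have h1 := hpow 1
  have h2 := hpow 2
  have h3 := hpow 3
  push_cast at h1 h2 h3
  -- With `A, a, B` the values of `f` at `n + 1, n, n - 1`, this is `n ^ 3` times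
  -- `A / (n + 1) + B / (n - 1) - 2 * a / n =`
  -- `(n ^ 2 * (A + B - 2 * a) - n * (A - B) + 2 * a) / (n * (n ^ 2 - 1))`.
  rw [Pi.div_apply, h1, h2, h3]
  field_simp
  ring

end LogAsymptotics

end PartitionAsymptotics

open PartitionAsymptotics

theorem limit_second_difference_log_nth_root_p :
    Tendsto (fun n : ℕ =>
        (n : ℝ) ^ ((5 : ℝ) / 2) *
          (Real.log (p (n + 1)) / ((n : ℝ) + 1) + Real.log (p (n - 1)) / ((n : ℝ) - 1) -
            2 * Real.log (p n) / (n : ℝ)))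
      atTop (nhds (3 * π / Real.sqrt 24)) := by
  have hdiff := tendsto_diff_log_p
  have hsecond := tendsto_second_diff_log_p
  rw [show (1 / 2 : ℝ) = 1 - 1 / 2 by norm_num] at hdiff
  rw [show (3 / 2 : ℝ) = 2 - 1 / 2 by norm_num] at hsecond
  have hconst : 3 * π / √24 = -(π / √6) / 2 - 2 * (π / √6) + 2 * (2 * (π / √6)) := by
    rw [show (24 : ℝ) = 2 ^ 2 * 6 by norm_num, sqrt_mul (by norm_num), sqrt_sq (by norm_num)]
    ring
  rw [hconst, show (5 / 2 : ℝ) = 3 - 1 / 2 by norm_num]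
  exact tendsto_second_diff_div_nat (f := fun n => log (p n)) tendsto_log_p hdiff hsecond
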